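/- arXiv:2603.27559 — 8 statements merged into one kernel-verified Lean document; each statement's English description precedes it below -/
import Mathlib

section
/- Let V and W be finite vertex types, and let G be a simple graph on V and H a simple graph on W. Then G and H are TF-isomorphic if and only if their canonical double covers CDC(G) and CDC(H) are isomorphic as simple graphs (i.e., there exists a graph isomorphism between CDC(G) and CDC(H)). -/
/-- The canonical double cover of a simple graph `G`:
vertices `V × Bool`, with `(u,i) ~ (v,j)` iff `u ~ v` in `G` and `i ≠ j`. -/
def CDC {V : Type*} (G : SimpleGraph V) : SimpleGraph (V × Bool) where
  Adj x y := G.Adj x.1 y.1 ∧ x.2 ≠ y.2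
  symm := ⟨fun _ _ h => ⟨h.1.symm, h.2.symm⟩⟩
  loopless := ⟨fun _ h => h.2 rfl⟩


lemma fiber_match {K L T : Type*} [Finite K] [Finite L] (tK : K → T) (tL : L → T) (s : T → T)
    (hs : ∀ t, s (s t) = t) (τK : K ≃ K) (τL : L ≃ L)
    (hK : ∀ C, tK (τK C) = s (tK C)) (hL : ∀ D, tL (τL D) = s (tL D)) (φ : K ≃ L)
    (hφ : ∀ C, tL (φ C) = tK C ∨ tL (φ C) = s (tK C)) :
    ∃ ψ : K ≃ L, ∀ C, tL (ψ C) = tK C := by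
  classical
  have := Fintype.ofFinite K
  have := Fintype.ofFinite L
  have key : ∀ t, Fintype.card {C // tK C = t} = Fintype.card {D // tL D = t} := by
    intro t
    have h1 : Fintype.card {C // tK C = t} = Fintype.card {C // tK C = s t} :=
      Fintype.card_congr (τK.subtypeEquiv (fun C => by
        rw [hK]; exact ⟨fun h => by rw [h], fun h => by rw [← hs (tK C), h, hs]⟩))
    have h2 : Fintype.card {C // tL C = t} = Fintype.card {C // tL C = s t} :=
      Fintype.card_congr (τL.subtypeEquiv (fun C => by
        rw [hL]; exact ⟨fun h => by rw [h], fun h => by rw [← hs (tL C), h, hs]⟩))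
    have h3 : Fintype.card {C // tK C = t} + Fintype.card {C // tK C = s t}
        = Fintype.card {C // tL C = t} + Fintype.card {C // tL C = s t} := by
      simp only [Fintype.card_subtype, Finset.card_filter]
      rw [← Finset.sum_add_distrib, ← Finset.sum_add_distrib, ← Equiv.sum_comp φ]
      refine Finset.sum_congr rfl fun C _ => ?_
      have e1 : s (tK C) = t ↔ tK C = s t :=
        ⟨fun h => by rw [← h, hs], fun h => by rw [h, hs]⟩
      have e2 : s (tK C) = s t ↔ tK C = t :=
        ⟨fun h => by rw [← hs (tK C), h, hs], fun h => by rw [h]⟩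
      rcases hφ C with h | h
      · rw [h]
      · rw [h]; simp only [e1, e2]; exact add_comm _ _
    omega
  let e : ∀ t, {C // tK C = t} ≃ {D // tL D = t} := fun t => Fintype.equivOfCardEq (key t)
  refine ⟨(Equiv.sigmaFiberEquiv tK).symm.trans
    ((Equiv.sigmaCongrRight e).trans (Equiv.sigmaFiberEquiv tL)), fun C => ?_⟩
  exact (e (tK C) ⟨C, rfl⟩).2

/-- Components `C`, `D` are isomorphic, with colours shifted by `b`. -/
def CdcCompRel {V W : Type*} (G : SimpleGraph V) (H : SimpleGraph W) (b : Bool)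
    (C : (CDC G).ConnectedComponent) (D : (CDC H).ConnectedComponent) : Prop :=
  ∃ f : {x // (CDC G).connectedComponentMk x = C} ≃ {y // (CDC H).connectedComponentMk y = D},
    (∀ x, (f x).1.2 = xor b x.1.2) ∧
      ∀ x y, (CDC G).Adj x.1 y.1 ↔ (CDC H).Adj (f x).1 (f y).1

lemma CdcCompRel.refl {V : Type*} (G : SimpleGraph V) (C : (CDC G).ConnectedComponent) :
    CdcCompRel G G false C C := ⟨Equiv.refl _, by simp, by simp⟩

lemma CdcCompRel.symm {V W : Type*} {G : SimpleGraph V} {H : SimpleGraph W} {b : Bool}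
    {C : (CDC G).ConnectedComponent} {D : (CDC H).ConnectedComponent}
    (h : CdcCompRel G H b C D) : CdcCompRel H G b D C := by
  obtain ⟨f, h1, h2⟩ := h
  refine ⟨f.symm, fun x => ?_, fun x y => ?_⟩
  · have := h1 (f.symm x)
    rw [Equiv.apply_symm_apply] at this
    rw [this]; simp
  · rw [h2]; simp

lemma CdcCompRel.trans {U V W : Type*} {F : SimpleGraph U} {G : SimpleGraph V} {H : SimpleGraph W}
    {b c : Bool} {B : (CDC F).ConnectedComponent}
    {C : (CDC G).ConnectedComponent} {D : (CDC H).ConnectedComponent}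
    (h : CdcCompRel F G b B C) (h' : CdcCompRel G H c C D) : CdcCompRel F H (xor c b) B D := by
  obtain ⟨f, h1, h2⟩ := h
  obtain ⟨g, h3, h4⟩ := h'
  refine ⟨f.trans g, fun x => ?_, fun x y => ?_⟩
  · simp [h3, h1]
  · rw [h2, h4]; rfl

lemma CdcCompRel.of_iso {V W : Type*} {G : SimpleGraph V} {H : SimpleGraph W}
    (φ : CDC G ≃g CDC H) (b : Bool) (C : (CDC G).ConnectedComponent)
    (hb : ∀ x, (CDC G).connectedComponentMk x = C → (φ x).2 = xor b x.2) :
    CdcCompRel G H b C (φ.connectedComponentEquiv C) := by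
  refine ⟨φ.toEquiv.subtypeEquiv fun x => ?_, fun x => hb x.1 x.2, fun x y => ?_⟩
  · rw [← φ.connectedComponentEquiv.apply_eq_iff_eq]
    rfl
  · exact φ.map_adj_iff.symm

lemma CdcCompRel.exists_of_iso {V W : Type*} {G : SimpleGraph V} {H : SimpleGraph W}
    (φ : CDC G ≃g CDC H) (C : (CDC G).ConnectedComponent) :
    ∃ b, CdcCompRel G H b C (φ.connectedComponentEquiv C) := by
  induction C using SimpleGraph.ConnectedComponent.ind with
  | _ x₀ =>
  refine ⟨xor (φ x₀).2 x₀.2, CdcCompRel.of_iso φ _ _ fun x hx => ?_⟩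
  obtain ⟨p⟩ := SimpleGraph.ConnectedComponent.exact hx
  have : xor (φ x).2 x.2 = xor (φ x₀).2 x₀.2 := by
    induction p with
    | nil => rfl
    | cons h p ih =>
      rw [← ih (SimpleGraph.ConnectedComponent.sound p.reachable)]
      have a := h.2
      have b := (φ.map_adj_iff.2 h).2
      revert a b
      generalize (φ _).2 = q, (φ _).2 = r
      generalize Prod.snd _ = q', Prod.snd _ = r'
      revert q r q' r'
      decide
  rw [← this]; simp

/-- The colour swapping involution. -/
def cdcSwap {V : Type*} (G : SimpleGraph V) : CDC G ≃g CDC G where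
  toFun x := (x.1, !x.2)
  invFun x := (x.1, !x.2)
  left_inv x := by simp
  right_inv x := by simp
  map_rel_iff' := by intro a b; simp [CDC]

lemma cdcSwap_swap {V : Type*} (G : SimpleGraph V) (C : (CDC G).ConnectedComponent) :
    (cdcSwap G).connectedComponentEquiv ((cdcSwap G).connectedComponentEquiv C) = C := by
  induction C using SimpleGraph.ConnectedComponent.ind with
  | _ x =>
  change (CDC G).connectedComponentMk (x.1, !!x.2) = _
  simp

lemma CdcCompRel.swap {V : Type*} (G : SimpleGraph V) (C : (CDC G).ConnectedComponent) :
    CdcCompRel G G true C ((cdcSwap G).connectedComponentEquiv C) :=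
  CdcCompRel.of_iso _ _ _ fun x _ => (Bool.true_xor x.2).symm

lemma CdcCompRel.swap_iff {V W : Type*} {G : SimpleGraph V} {H : SimpleGraph W}
    (C : (CDC G).ConnectedComponent) (D : (CDC H).ConnectedComponent) :
    CdcCompRel G H false ((cdcSwap G).connectedComponentEquiv C) D ↔
      CdcCompRel G H false C ((cdcSwap H).connectedComponentEquiv D) :=
  ⟨fun h => ((CdcCompRel.swap G C).trans h).trans (CdcCompRel.swap H D),
   fun h => ((CdcCompRel.swap G C).symm.trans h).trans (CdcCompRel.swap H D).symm⟩

lemma exists_matching {V W : Type*} [Finite V] [Finite W]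
    (G : SimpleGraph V) (H : SimpleGraph W) (φ : CDC G ≃g CDC H) :
    ∃ ψ : (CDC G).ConnectedComponent ≃ (CDC H).ConnectedComponent,
      ∀ C, CdcCompRel G H false C (ψ C) := by
  have : Finite (CDC G).ConnectedComponent := Quot.finite _
  have : Finite (CDC H).ConnectedComponent := Quot.finite _
  have hK : ∀ C, {D | CdcCompRel G H false ((cdcSwap G).connectedComponentEquiv C) D} =
      {D | (cdcSwap H).connectedComponentEquiv D ∈ {D | CdcCompRel G H false C D}} := fun C => by
    ext D; exact CdcCompRel.swap_iff C D
  have step : ∀ C D, CdcCompRel G H false C D →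
      {E | CdcCompRel H H false D E} = {E | CdcCompRel G H false C E} := fun C D h => by
    ext E; exact ⟨fun h' => h.trans h', fun h' => h.symm.trans h'⟩
  obtain ⟨ψ, hψ⟩ := fiber_match (fun C => {D | CdcCompRel G H false C D})
    (fun D => {E | CdcCompRel H H false D E})
    (fun S => {D | (cdcSwap H).connectedComponentEquiv D ∈ S})
    (fun t => by ext D; simp only [Set.mem_ofPred_eq, cdcSwap_swap])
    (cdcSwap G).connectedComponentEquiv (cdcSwap H).connectedComponentEquiv
    hK (fun D => by ext E; exact CdcCompRel.swap_iff D E) φ.connectedComponentEquiv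
    (fun C => by
      obtain ⟨b, hb⟩ := CdcCompRel.exists_of_iso φ C
      cases b
      · exact Or.inl (step _ _ hb)
      · refine Or.inr ((step _ _ ?_).trans (hK C))
        exact (CdcCompRel.swap G C).symm.trans hb)
  refine ⟨ψ, fun C => ?_⟩
  have := CdcCompRel.refl H (ψ C)
  have h2 : ψ C ∈ {E | CdcCompRel H H false (ψ C) E} := this
  rw [hψ C] at h2
  exact h2

lemma exists_colored_iso {V W : Type*} [Finite V] [Finite W]
    (G : SimpleGraph V) (H : SimpleGraph W) (φ : CDC G ≃g CDC H) :
    ∃ Ψ : V × Bool ≃ W × Bool, (∀ x, (Ψ x).2 = x.2) ∧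
      ∀ x y, (CDC G).Adj x y ↔ (CDC H).Adj (Ψ x) (Ψ y) := by
  obtain ⟨ψ, hψ⟩ := exists_matching G H φ
  choose f hf1 hf2 using hψ
  refine ⟨(Equiv.sigmaFiberEquiv (CDC G).connectedComponentMk).symm.trans
    ((Equiv.sigmaCongr ψ f).trans (Equiv.sigmaFiberEquiv (CDC H).connectedComponentMk)),
    fun x => ?_, fun x y => ?_⟩
  · exact (hf1 _ ⟨x, rfl⟩).trans (by simp)
  · change _ ↔ (CDC H).Adj (f _ ⟨x, rfl⟩).1 (f _ ⟨y, rfl⟩).1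
    have aux : ∀ C (hC : (CDC G).connectedComponentMk y = C),
        (f _ ⟨y, rfl⟩).1 = (f C ⟨y, hC⟩).1 := by
      rintro C rfl; rfl
    by_cases hxy : (CDC G).connectedComponentMk y = (CDC G).connectedComponentMk x
    · rw [aux _ hxy]
      exact hf2 _ ⟨x, rfl⟩ ⟨y, hxy⟩
    · refine iff_of_false (fun h => hxy ?_) (fun h => hxy ?_)
      · exact (SimpleGraph.ConnectedComponent.sound h.reachable).symm
      · have := SimpleGraph.ConnectedComponent.sound h.reachable
        rw [(f _ ⟨x, rfl⟩).2, (f _ ⟨y, rfl⟩).2] at this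
        exact (ψ.injective this).symm

/-- Restriction of a colour preserving bijection to one colour class. -/
lemma exists_restrict {V W : Type*} (Ψ : V × Bool ≃ W × Bool) (h : ∀ x, (Ψ x).2 = x.2)
    (b : Bool) : ∃ α : V ≃ W, ∀ u, Ψ (u, b) = (α u, b) := by
  have hb : ∀ u, Ψ (u, b) = ((Ψ (u, b)).1, b) := fun u => Prod.ext rfl (h _)
  refine ⟨Equiv.ofBijective (fun u => (Ψ (u, b)).1) ⟨fun u v huv => ?_, fun w => ?_⟩, hb⟩
  · have : Ψ (u, b) = Ψ (v, b) := by rw [hb u, hb v]; exact Prod.ext huv rfl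
    exact congrArg Prod.fst (Ψ.injective this)
  · have h1 := h (Ψ.symm (w, b))
    rw [Equiv.apply_symm_apply] at h1
    refine ⟨(Ψ.symm (w, b)).1, ?_⟩
    have h2 : ((Ψ.symm (w, b)).1, b) = Ψ.symm (w, b) := Prod.ext rfl h1
    change (Ψ ((Ψ.symm (w, b)).1, b)).1 = w
    rw [h2, Equiv.apply_symm_apply]

/-- Two graphs are TF-isomorphic iff their canonical double covers are isomorphic. -/
theorem tf_isomorphic_iff_cdc_iso {V W : Type*} [Fintype V] [Fintype W]
    (G : SimpleGraph V) (H : SimpleGraph W) :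
    (∃ α β : V ≃ W, ∀ u v : V, G.Adj u v ↔ H.Adj (α u) (β v)) ↔
      Nonempty (CDC G ≃g CDC H) := by
  constructor
  · rintro ⟨α, β, h⟩
    refine ⟨⟨⟨fun x => (cond x.2 (β x.1) (α x.1), x.2),
      fun y => (cond y.2 (β.symm y.1) (α.symm y.1), y.2), ?_, ?_⟩, ?_⟩⟩
    · rintro ⟨u, _ | _⟩ <;> simp
    · rintro ⟨u, _ | _⟩ <;> simp
    · rintro ⟨u, _ | _⟩ ⟨v, _ | _⟩
      · simp [CDC]
      · simp [CDC, h]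
      · simp only [CDC, Equiv.coe_fn_mk, cond_true, cond_false]
        rw [G.adj_comm u v, h, H.adj_comm]
      · simp [CDC]
  · rintro ⟨φ⟩
    obtain ⟨Ψ, h1, h2⟩ := exists_colored_iso G H φ
    obtain ⟨α, hα⟩ := exists_restrict Ψ h1 false
    obtain ⟨β, hβ⟩ := exists_restrict Ψ h1 true
    refine ⟨α, β, fun u v => ?_⟩
    have := h2 (u, false) (v, true)
    rw [hα, hβ] at this
    simpa [CDC] using this
end

section
/- Let G be a connected simple graph on a finite vertex type V. Then the canonical double cover CDC(G) is disconnected (not connected as a simple graph) if and only if G is bipartite (2-colorable). -/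
theorem CDC_lift {V : Type*} (G : SimpleGraph V) {u v : V} (p : G.Walk u v) :
    ∃ k : Bool, ∀ i, (CDC G).Reachable (u, i) (v, xor i k) := by
  induction p with
  | nil => exact ⟨false, fun i => by simp⟩
  | @cons a b c h p ih =>
    obtain ⟨k, hk⟩ := ih
    refine ⟨!k, fun i => ?_⟩
    have h1 : (CDC G).Adj (a, i) (b, !i) := ⟨h, by simp⟩
    have h2 := h1.reachable.trans (hk (!i))
    simpa using h2

theorem CDC_inv {V : Type*} (G : SimpleGraph V) (c : G.Coloring Bool) {x y : V × Bool}
    (p : (CDC G).Walk x y) : xor (c x.1) x.2 = xor (c y.1) y.2 := by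
  induction p with
  | nil => rfl
  | cons h p ih =>
    rw [← ih]
    have h1 := c.valid h.1
    have h2 := h.2
    have aux : ∀ a b d e : Bool, a ≠ b → d ≠ e → xor a d = xor b e := by decide
    exact aux _ _ _ _ h1 h2

/-- For a connected graph `G`, the canonical double cover is disconnected
iff `G` is bipartite. -/
theorem cdc_not_connected_iff_bipartite {V : Type*} [Fintype V]
    (G : SimpleGraph V) (hG : G.Connected) :
    ¬ (CDC G).Connected ↔ G.Colorable 2 := by
  classical
  obtain ⟨v0⟩ := hG.nonempty
  constructor
  · intro hn
    have step : ∀ u v i, G.Adj u v → (CDC G).Reachable (v0, false) (u, i) →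
        (CDC G).Reachable (v0, false) (v, !i) := by
      intro u v i h hr
      have h1 : (CDC G).Adj (u, i) (v, !i) := ⟨h, by simp⟩
      exact hr.trans h1.reachable
    have some_lift : ∀ v, ∃ j, (CDC G).Reachable (v0, false) (v, j) := by
      intro v
      obtain ⟨p⟩ := hG.preconnected v0 v
      obtain ⟨k, hk⟩ := CDC_lift G p
      exact ⟨_, hk false⟩
    have key : ∀ v, (CDC G).Reachable (v0, false) (v, true) →
        (CDC G).Reachable (v0, false) (v, false) → False := by
      intro v ht hf
      apply hn
      have hall : ∀ x, (CDC G).Reachable (v0, false) x := by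
        rintro ⟨w, j⟩
        obtain ⟨p⟩ := hG.preconnected v w
        obtain ⟨k, hk⟩ := CDC_lift G p
        have h1 := ht.trans (hk true)
        have h2 := hf.trans (hk false)
        cases j <;> cases k <;> simp_all
      haveI : Nonempty (V × Bool) := ⟨(v0, false)⟩
      exact ⟨fun x y => (hall x).symm.trans (hall y)⟩
    let c : G.Coloring Bool := SimpleGraph.Coloring.mk
      (fun v => decide ((CDC G).Reachable (v0, false) (v, true))) (by
        intro u v h heq
        have heq' := decide_eq_decide.mp heq
        by_cases hu : (CDC G).Reachable (v0, false) (u, true)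
        · exact key v (heq'.mp hu) (step u v true h hu)
        · obtain ⟨j, hj⟩ := some_lift u
          cases j
          · exact hu (heq'.mpr (step u v false h hj))
          · exact hu hj)
    simpa using c.colorable
  · rintro hc hconn
    have c : G.Coloring Bool := hc.toColoring (by simp)
    obtain ⟨p⟩ := hconn.preconnected (v0, false) (v0, true)
    have := CDC_inv G c p
    simp at this
end

section
/- Let G be a simple graph on a finite vertex type V and let π : V ≃ V be a bijection such that (i) for all u, v ∈ V, if u and v are adjacent in G then π⁻¹(v) and π(u) are adjacent in G, and (ii) for all a ∈ V, a and π(a) are not adjacent in G. Then the relation on V defined by 'a ~ b iff a and π(b) are adjacent in G' is symmetric and irreflexive, hence defines a simple graph H' on V (the fold of the lift of G guided by π), and moreover CDC(G) and CDC(H') are isomorphic as simple graphs. -/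
/-- Folding the lift of `G` guided by a strongly switching permutation `π`:
the relation `a ~ b iff a ~ π(b)` is symmetric and irreflexive, and the simple
graph `H'` it defines has the same canonical double cover as `G`. -/
theorem fold_guided_by_switching_involution {V : Type*} [Fintype V]
    (G : SimpleGraph V) (π : V ≃ V)
    (h1 : ∀ u v : V, G.Adj u v → G.Adj (π.symm v) (π u))
    (h2 : ∀ a : V, ¬ G.Adj a (π a)) :
    (∀ a b : V, G.Adj a (π b) → G.Adj b (π a)) ∧
    (∀ a : V, ¬ G.Adj a (π a)) ∧
    (∀ H' : SimpleGraph V, (∀ a b : V, H'.Adj a b ↔ G.Adj a (π b)) →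
      Nonempty (CDC G ≃g CDC H')) := by
  have hs : ∀ a b : V, G.Adj a (π b) → G.Adj b (π a) := by
    intro a b h
    simpa using h1 _ _ h
  refine ⟨hs, h2, fun H' hH => ?_⟩
  let e : V × Bool ≃ V × Bool :=
    { toFun := fun x => (if x.2 then π x.1 else x.1, x.2)
      invFun := fun x => (if x.2 then π.symm x.1 else x.1, x.2)
      left_inv := by rintro ⟨v, _ | _⟩ <;> simp
      right_inv := by rintro ⟨v, _ | _⟩ <;> simp }
  have he : ∀ x y, (CDC G).Adj (e x) (e y) ↔ (CDC H').Adj x y := by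
    rintro ⟨a, _ | _⟩ ⟨b, _ | _⟩
    · simp [CDC, e]
    · simp [CDC, e, hH]
    · simp only [CDC, e, hH]
      exact and_congr_left fun _ => ⟨fun h => hs _ _ h.symm, fun h => (hs _ _ h).symm⟩
    · simp [CDC, e]
  exact ⟨(RelIso.symm ⟨e, fun {x y} => he x y⟩ : CDC G ≃g CDC H')⟩
end

section
/- Let G be a simple graph on a vertex type V and let π : V ≃ V be a bijection such that for all u, v ∈ V, if u and v are adjacent in G then π⁻¹(v) and π(u) are adjacent in G. Define φ : V × Bool → V × Bool by φ(v, false) = (π(v), true) and φ(v, true) = (π⁻¹(v), false). Then φ is an involution (φ ∘ φ = id), φ interchanges the two colour classes V × {false} and V × {true}, and φ is an automorphism of the canonical double cover CDC(G): for all x, y ∈ V × Bool, x and y are adjacent in CDC(G) if and only if φ(x) and φ(y) are adjacent in CDC(G). -/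
/-- Every guide for folding the lift of `G` is a switching involution of the
automorphism group of `CDC(G)`: the map `φ` with `φ(v,false) = (π v, true)` and
`φ(v,true) = (π⁻¹ v, false)` is an involution, interchanges the two colour
classes, and is an automorphism of `CDC(G)`. -/
theorem guide_is_switching_involution {V : Type*} (G : SimpleGraph V) (π : V ≃ V)
    (h1 : ∀ u v : V, G.Adj u v → G.Adj (π.symm v) (π u))
    (φ : V × Bool → V × Bool)
    (hφf : ∀ v : V, φ (v, false) = (π v, true))
    (hφt : ∀ v : V, φ (v, true) = (π.symm v, false)) :
    (∀ x : V × Bool, φ (φ x) = x) ∧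
    (∀ x : V × Bool, (φ x).2 = !x.2) ∧
    (∀ x y : V × Bool, (CDC G).Adj x y ↔ (CDC G).Adj (φ x) (φ y)) := by
  have hinv : ∀ x : V × Bool, φ (φ x) = x := by
    rintro ⟨v, _ | _⟩ <;> simp [hφf, hφt]
  have hfwd : ∀ x y : V × Bool, (CDC G).Adj x y → (CDC G).Adj (φ x) (φ y) := by
    rintro ⟨u, _ | _⟩ ⟨v, _ | _⟩ ⟨ha, hb⟩
    · exact absurd rfl hb
    · rw [hφf, hφt]
      exact ⟨(h1 u v ha).symm, by simp⟩
    · rw [hφf, hφt]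
      exact ⟨h1 v u ha.symm, by simp⟩
    · exact absurd rfl hb
  refine ⟨hinv, ?_, fun x y => ⟨hfwd x y, fun h => ?_⟩⟩
  · rintro ⟨v, _ | _⟩ <;> simp [hφf, hφt]
  · have h2 := hfwd _ _ h
    rwa [hinv, hinv] at h2
end

section
/- Let G be a connected, non-bipartite (not 2-colorable) simple graph on a finite vertex type V. Then G admits a non-trivial TF-automorphism, i.e., bijections α, β : V ≃ V with α ≠ β such that for all u, v ∈ V, u and v are adjacent in G if and only if α(u) and β(v) are adjacent in G, if and only if the canonical double cover CDC(G) has an unexpected automorphism: an automorphism f of CDC(G) such that for every automorphism γ of G and every constant b : Bool, f is not equal to the map (v, i) ↦ (γ(v), xor b i). (That is, G is unstable if and only if it has a non-trivial TF-automorphism.) -/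
theorem const_of_adj {V : Type*} {W : Type*} (G : SimpleGraph V) (hconn : G.Connected) (g : V → W)
    (h : ∀ u v, G.Adj u v → g u = g v) (u v : V) : g u = g v := by
  obtain ⟨p⟩ := hconn.preconnected u v
  induction p with
  | nil => rfl
  | cons hadj _ ih => exact (h _ _ hadj).trans ih

/-- A connected non-bipartite graph `G` has a non-trivial TF-automorphism iff
`CDC(G)` has an unexpected automorphism, i.e. `G` is unstable iff it admits
a non-trivial TF-automorphism. -/
theorem unstable_iff_nontrivial_tf_automorphism {V : Type*} [Fintype V]
    (G : SimpleGraph V) (hconn : G.Connected) (hnb : ¬ G.Colorable 2) :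
    (∃ α β : V ≃ V, α ≠ β ∧ ∀ u v : V, G.Adj u v ↔ G.Adj (α u) (β v)) ↔
      (∃ f : CDC G ≃g CDC G, ∀ (γ : G ≃g G) (b : Bool),
        ⇑f ≠ fun x : V × Bool => (γ x.1, xor b x.2)) := by
  classical
  constructor
  · rintro ⟨α, β, hne, h⟩
    let e : V × Bool ≃ V × Bool :=
      { toFun := fun x => (if x.2 then β x.1 else α x.1, x.2)
        invFun := fun x => (if x.2 then β.symm x.1 else α.symm x.1, x.2)
        left_inv := by rintro ⟨v, _ | _⟩ <;> simp
        right_inv := by rintro ⟨v, _ | _⟩ <;> simp }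
    refine ⟨⟨e, ?_⟩, ?_⟩
    · rintro ⟨u, _ | _⟩ ⟨v, _ | _⟩
      · simp [e, CDC]
      · simpa [e, CDC] using (h u v).symm
      · have := (h v u).symm
        rw [G.adj_comm, G.adj_comm v u] at this
        simpa [e, CDC] using this
      · simp [e, CDC]
    · intro γ b hf
      apply hne
      ext v
      have h0 := congrArg Prod.fst (congrFun hf (v, false))
      have h1 := congrArg Prod.fst (congrFun hf (v, true))
      simp [e] at h0 h1
      rw [h0, h1]
  · rintro ⟨f, hf⟩
    let c : V → Bool → Bool := fun v i => xor (f (v, i)).2 i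
    have hc : ∀ u v i, G.Adj u v → c u i = c v (!i) := by
      intro u v i huv
      have h1 : (CDC G).Adj (u, i) (v, !i) := ⟨huv, by simp⟩
      have h2 := (f.map_adj_iff.mpr h1).2
      revert h2
      simp only [c]
      generalize (f (u, i)).2 = a
      generalize (f (v, !i)).2 = b
      clear h1
      revert a b i
      decide
    have hinv := const_of_adj G hconn (fun v => xor (c v false) (c v true)) (by
      intro u v huv
      have h1 := hc u v false huv
      have h2 := hc u v true huv
      simp only [Bool.not_false, Bool.not_true] at h1 h2
      simp only [h1, h2]
      exact Bool.xor_comm _ _)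
    have heq : ∀ v, c v false = c v true := by
      by_contra hcon
      push Not at hcon
      obtain ⟨w, hw⟩ := hcon
      apply hnb
      have hall : ∀ v, c v false ≠ c v true := by
        intro v hv
        have := hinv v w
        simp only [hv, Bool.xor_self] at this
        apply hw
        revert this
        generalize c w false = a
        generalize c w true = b
        revert a b
        decide
      have C : G.Coloring Bool := SimpleGraph.Coloring.mk (fun v => c v false) (by
        intro u v huv h
        have h2 := hc v u false huv.symm
        exact hall u (h.trans h2))
      simpa using C.colorable
    have hconst := const_of_adj G hconn (fun v => c v false) (fun u v huv =>
      (hc u v false huv).trans (heq v).symm)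
    obtain ⟨w⟩ := hconn.nonempty
    have hb : ∀ v i, (f (v, i)).2 = xor (c w false) i := by
      intro v i
      have h1 : c v i = c w false := by
        cases i
        · exact hconst v w
        · exact (heq v).symm.trans (hconst v w)
      rw [← h1]
      simp [c]
    have hbij : ∀ i, Function.Bijective (fun v => (f (v, i)).1) := by
      intro i
      apply Finite.injective_iff_bijective.mp
      intro u v huv
      have : f (u, i) = f (v, i) := Prod.ext huv ((hb u i).trans (hb v i).symm)
      exact congrArg Prod.fst (f.injective this)
    have hadj : ∀ u v, G.Adj u v ↔ G.Adj (f (u, false)).1 (f (v, true)).1 := by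
      intro u v
      have h : (CDC G).Adj (f (u, false)) (f (v, true)) ↔ (CDC G).Adj (u, false) (v, true) :=
        f.map_adj_iff
      have hne : (f (u, false)).2 ≠ (f (v, true)).2 := by
        rw [hb u false, hb v true]
        generalize c w false = a
        revert a
        decide
      exact ⟨fun huv => (h.mpr ⟨huv, by simp⟩).1, fun h' => (h.mp ⟨h', hne⟩).1⟩
    refine ⟨Equiv.ofBijective _ (hbij false), Equiv.ofBijective _ (hbij true), ?_, hadj⟩
    intro hαβ
    have hαβ' : ∀ v, (f (v, false)).1 = (f (v, true)).1 := fun v => DFunLike.congr_fun hαβ v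
    refine hf ⟨Equiv.ofBijective _ (hbij false), ?_⟩ (c w false) ?_
    · intro u v
      have := (hadj u v).symm
      rw [← hαβ' v] at this
      exact this
    · funext ⟨v, i⟩
      refine Prod.ext ?_ (hb v i)
      cases i
      · rfl
      · exact (hαβ' v).symm
end

section
/- Let G be a simple graph on a vertex type V. If G is bipartite (2-colorable), then the canonical double cover CDC(G) is isomorphic to the disjoint union of two copies of G, i.e., to the simple graph on V × Bool in which (u,i) and (v,j) are adjacent if and only if u and v are adjacent in G and i = j. -/
/-- The disjoint union of two copies of `G`, realized on `V × Bool`. -/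
def twoCopies {V : Type*} (G : SimpleGraph V) : SimpleGraph (V × Bool) where
  Adj x y := G.Adj x.1 y.1 ∧ x.2 = y.2
  symm := ⟨fun _ _ h => ⟨h.1.symm, h.2.symm⟩⟩
  loopless := ⟨fun _ h => G.loopless.irrefl _ h.1⟩

/-- If `G` is bipartite, then `CDC(G)` is isomorphic to the disjoint union of
two copies of `G`. -/
theorem cdc_of_bipartite {V : Type*} (G : SimpleGraph V) (h : G.Colorable 2) :
    Nonempty (CDC G ≃g twoCopies G) := by
  obtain ⟨c⟩ := h
  -- a Bool-valued proper coloring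
  obtain ⟨f, hf⟩ : ∃ f : V → Bool, ∀ u v, G.Adj u v → f u ≠ f v := by
    refine ⟨fun v => decide (c v = 0), fun u v huv => ?_⟩
    have hne : c u ≠ c v := c.valid huv
    change decide (c u = 0) ≠ decide (c v = 0)
    generalize c u = a at hne ⊢
    generalize c v = b at hne ⊢
    revert a b
    decide
  refine ⟨⟨⟨fun x => (x.1, xor x.2 (f x.1)), fun x => (x.1, xor x.2 (f x.1)),
    fun x => by simp, fun x => by simp⟩, ?_⟩⟩
  rintro ⟨u, i⟩ ⟨v, j⟩
  change (G.Adj u v ∧ xor i (f u) = xor j (f v)) ↔ (G.Adj u v ∧ i ≠ j)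
  refine and_congr_right fun huv => ?_
  have hne := hf u v huv
  generalize f u = a at hne ⊢
  generalize f v = b at hne ⊢
  clear huv
  revert i j a b
  decide
end

section
/- Let k ≥ 3 be an odd natural number. Let D be the disjoint union of two copies of the cycle graph C_k, realized on (Fin k) × Bool with (a,i) adjacent to (b,j) iff a and b are adjacent in the cycle graph on Fin k and i = j, and let C be the cycle graph C_{2k} on Fin (2k). Then D and C are TF-cousins: (1) there exist bijections α, β : (Fin k) × Bool ≃ Fin (2k) such that for all x, y, x and y are adjacent in D if and only if α(x) and β(y) are adjacent in C; and (2) D and C are not isomorphic as simple graphs. -/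
/-- The cycle graph on `Fin n`: `a` and `b` are joined exactly when they differ
by `±1` modulo `n`. -/
def cycleG (n : ℕ) : SimpleGraph (Fin n) where
  Adj a b := a ≠ b ∧ ((a.val + 1) % n = b.val ∨ (b.val + 1) % n = a.val)
  symm := ⟨fun _ _ h => ⟨h.1.symm, h.2.symm⟩⟩
  loopless := ⟨fun _ h => h.1 rfl⟩

/-- The CRT-style labelling value. -/
def tfVal (k a : ℕ) (i : Bool) : ℕ :=
  if a % 2 = i.toNat then a else a + k

theorem succ_mod_eq (n a : ℕ) (h : a < n) : (a + 1) % n = if a + 1 = n then 0 else a + 1 := by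
  split_ifs with h1
  · rw [h1, Nat.mod_self]
  · exact Nat.mod_eq_of_lt (by omega)

theorem tfVal_lt (k a : ℕ) (i : Bool) (h : a < k) : tfVal k a i < 2 * k := by
  unfold tfVal; split_ifs <;> omega

/-- The labelling map. -/
def tfMap (k : ℕ) (x : Fin k × Bool) : Fin (2 * k) :=
  ⟨tfVal k x.1.val x.2, tfVal_lt k _ _ x.1.isLt⟩

theorem tfMap_bij (k : ℕ) : Function.Bijective (tfMap k) := by
  rw [Fintype.bijective_iff_injective_and_card]
  refine ⟨?_, by simp [mul_comm]⟩
  rintro ⟨⟨a, ha⟩, i⟩ ⟨⟨b, hb⟩, j⟩ h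
  have h' : tfVal k a i = tfVal k b j := congrArg Fin.val h
  simp only [Prod.mk.injEq, Fin.mk.injEq]
  unfold tfVal at h'
  cases i <;> cases j <;> simp only [Bool.toNat_false, Bool.toNat_true] at h' <;>
    split_ifs at h' <;> simp <;> omega

theorem tf_adj (k : ℕ) (hk : 3 ≤ k) (hodd : Odd k) (x y : Fin k × Bool) :
    (twoCopies (cycleG k)).Adj x y ↔ (cycleG (2 * k)).Adj (tfMap k x) (tfMap k (y.1, !y.2)) := by
  obtain ⟨t, rfl⟩ := hodd
  obtain ⟨⟨a, ha⟩, i⟩ := x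
  obtain ⟨⟨b, hb⟩, j⟩ := y
  have h1 := tfVal_lt (2 * t + 1) a i ha
  have h2 := tfVal_lt (2 * t + 1) b (!j) hb
  simp only [twoCopies, cycleG, tfMap, ne_eq, Fin.mk.injEq]
  rw [succ_mod_eq _ _ ha, succ_mod_eq _ _ hb, succ_mod_eq _ _ h1, succ_mod_eq _ _ h2]
  clear h1 h2
  unfold tfVal
  cases i <;> cases j <;>
    simp only [Bool.toNat_false, Bool.toNat_true, Bool.not_true, Bool.not_false, and_true,
      reduceCtorEq, and_false, false_iff] <;>
    split_ifs <;> (try simp only [or_false, false_or, or_self, and_false, iff_false, not_false_eq_true]) <;> omega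

theorem cycle_parity (k : ℕ) (u v : Fin (2 * k)) (h : (cycleG (2 * k)).Adj u v) :
    v.val % 2 = (u.val + 1) % 2 := by
  have hu := u.isLt
  have hv := v.isLt
  have h2 := h.2
  rw [succ_mod_eq _ _ hu, succ_mod_eq _ _ hv] at h2
  split_ifs at h2 <;> omega

/-- For odd `k ≥ 3`, the disjoint union `C_k ∪ C_k` and the cycle `C_{2k}` are
TF-cousins: they are TF-isomorphic but not isomorphic. -/
theorem seed_pair_tf_cousins (k : ℕ) (hk : 3 ≤ k) (hodd : Odd k) :
    (∃ α β : (Fin k × Bool) ≃ Fin (2 * k),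
      ∀ x y : Fin k × Bool,
        (twoCopies (cycleG k)).Adj x y ↔ (cycleG (2 * k)).Adj (α x) (β y)) ∧
    IsEmpty (twoCopies (cycleG k) ≃g cycleG (2 * k)) := by
  refine ⟨⟨Equiv.ofBijective _ (tfMap_bij k),
    (Equiv.prodCongr (Equiv.refl _) Equiv.boolNot).trans (Equiv.ofBijective _ (tfMap_bij k)),
    fun x y => tf_adj k hk hodd x y⟩, ⟨fun f => ?_⟩⟩
  have key : ∀ a (ha : a < k), (f (⟨a, ha⟩, false)).val % 2 =
      ((f (⟨0, by omega⟩, false)).val + a) % 2 := by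
    intro a
    induction a with
    | zero => intro ha; rfl
    | succ a ih =>
      intro ha
      have h1 := ih (by omega)
      have h2 := cycle_parity k (f (⟨a, by omega⟩, false)) (f (⟨a + 1, ha⟩, false))
        (f.map_rel_iff.2 ⟨⟨by simp, Or.inl (Nat.mod_eq_of_lt ha)⟩, rfl⟩)
      omega
  have h1 := key (k - 1) (by omega)
  have h2 := cycle_parity k (f (⟨k - 1, by omega⟩, false)) (f (⟨0, by omega⟩, false))
    (f.map_rel_iff.2 ⟨⟨by simp; omega, Or.inl (by
      show (k - 1 + 1) % k = 0
      rw [Nat.sub_add_cancel (by omega), Nat.mod_self])⟩, rfl⟩)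
  obtain ⟨t, rfl⟩ := hodd
  omega
end

section
/- For every even natural number n ≥ 2, the canonical double covers CDC(CG(n)) and CDC(CG'(n)) of the claw graph CG(n) and its companion CG'(n) are not isomorphic as simple graphs; equivalently, CG(n) and CG'(n) are not TF-isomorphic. -/
/-- Vertices of the claw graph `CG(n)`: circuit vertices indexed by `ZMod (6n)`,
leaves indexed by `Fin n × Fin 3`, and centres indexed by `Fin n`. -/
inductive ClawVert (n : ℕ) : Type
  | circ : ZMod (6 * n) → ClawVert n
  | leaf : Fin n → Fin 3 → ClawVert n
  | centre : Fin n → ClawVert n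
  deriving DecidableEq

/-- Edge relation (before symmetrization) for the claw graph `CG(n)`:
a cycle `C_{6n}` on the circuit vertices, claw edges `c_i ~ ℓ_{i,j}`, and leaf
`ℓ_{i,j}` joined to the antipodal pair `u_{i+jn}`, `u_{i+jn+3n}`. -/
def cgRel (n : ℕ) : ClawVert n → ClawVert n → Prop
  | .circ m, .circ m' => m' = m + 1
  | .centre i, .leaf i' _ => i = i'
  | .leaf i j, .circ m =>
      m = ((i : ℕ) : ZMod (6 * n)) + ((j : ℕ) : ZMod (6 * n)) * ((n : ℕ) : ZMod (6 * n)) ∨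
      m = ((i : ℕ) : ZMod (6 * n)) + ((j : ℕ) : ZMod (6 * n)) * ((n : ℕ) : ZMod (6 * n))
            + ((3 * n : ℕ) : ZMod (6 * n))
  | _, _ => False

/-- The claw graph `CG(n)`. -/
def CG (n : ℕ) : SimpleGraph (ClawVert n) := SimpleGraph.fromRel (cgRel n)

/-- Edge relation (before symmetrization) for the companion `CG'(n)`: the same
claw and leaf edges, but the circuit `C_{6n}` is replaced by two disjoint copies
of `C_{3n}`: writing a circuit index as `s·3n + a` with `0 ≤ a < 3n`,
`u_{s·3n+a} ~ u_{s'·3n+a'}` iff `s = s'` and `a' ≡ a ± 1 (mod 3n)`. -/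
def cgRel' (n : ℕ) : ClawVert n → ClawVert n → Prop
  | .circ m, .circ m' =>
      m.val / (3 * n) = m'.val / (3 * n) ∧
      m'.val % (3 * n) = (m.val % (3 * n) + 1) % (3 * n)
  | .centre i, .leaf i' _ => i = i'
  | .leaf i j, .circ m =>
      m = ((i : ℕ) : ZMod (6 * n)) + ((j : ℕ) : ZMod (6 * n)) * ((n : ℕ) : ZMod (6 * n)) ∨
      m = ((i : ℕ) : ZMod (6 * n)) + ((j : ℕ) : ZMod (6 * n)) * ((n : ℕ) : ZMod (6 * n))
            + ((3 * n : ℕ) : ZMod (6 * n))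
  | _, _ => False

/-- The companion claw graph `CG'(n)`. -/
def CG' (n : ℕ) : SimpleGraph (ClawVert n) := SimpleGraph.fromRel (cgRel' n)

open Classical in
/-- The eigenspace of eigenvalue `2` of a finite graph. -/
noncomputable def eigTwo {W : Type*} [Fintype W] (H : SimpleGraph W) : Submodule ℝ (W → ℝ) where
  carrier := {f | ∀ x, (∑ y, if H.Adj x y then f y else 0) = 2 * f x}
  zero_mem' := by intro x; simp
  add_mem' := by
    intro f g hf hg x
    have h : (∑ y, if H.Adj x y then (f + g) y else 0)
        = (∑ y, if H.Adj x y then f y else 0) + (∑ y, if H.Adj x y then g y else 0) := by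
      rw [← Finset.sum_add_distrib]
      refine Finset.sum_congr rfl fun y _ => ?_
      split_ifs <;> simp
    rw [h, hf x, hg x, Pi.add_apply]; ring
  smul_mem' := by
    intro c f hf x
    have h : (∑ y, if H.Adj x y then (c • f) y else 0)
        = c * (∑ y, if H.Adj x y then f y else 0) := by
      rw [Finset.mul_sum]
      refine Finset.sum_congr rfl fun y _ => ?_
      split_ifs <;> simp
    rw [h, hf x, Pi.smul_apply, smul_eq_mul]; ring

open Classical in
theorem mem_eigTwo {W : Type*} [Fintype W] (H : SimpleGraph W) (f : W → ℝ) :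
    f ∈ eigTwo H ↔ ∀ x, (∑ y, if H.Adj x y then f y else 0) = 2 * f x := Iff.rfl

theorem eigTwo_finrank_le {W W' : Type*} [Fintype W] [Fintype W']
    {H : SimpleGraph W} {H' : SimpleGraph W'} (e : H ≃g H') :
    Module.finrank ℝ (eigTwo H') ≤ Module.finrank ℝ (eigTwo H) := by
  classical
  let L : (W' → ℝ) →ₗ[ℝ] (W → ℝ) := LinearMap.funLeft ℝ ℝ e
  have hL : ∀ f ∈ eigTwo H', L f ∈ eigTwo H := by
    intro f hf
    rw [mem_eigTwo] at hf ⊢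
    intro x
    have := hf (e x)
    simp only [L, LinearMap.funLeft_apply]
    rw [← this, ← Equiv.sum_comp e.toEquiv]
    refine Finset.sum_congr rfl fun y _ => ?_
    have h : H'.Adj (e x) (e.toEquiv y) ↔ H.Adj x y := e.map_rel_iff
    simp only [h]
    rfl
  apply LinearMap.finrank_le_finrank_of_injective (f := L.restrict hL)
  intro a b hab
  have h1 : L a.1 = L b.1 := congrArg Subtype.val hab
  apply Subtype.ext
  exact (LinearMap.funLeft_injective_of_surjective ℝ ℝ (e : W → W') e.surjective) h1

/-- The vertices as a sum type. -/
def clawEquiv (n : ℕ) : (ZMod (6 * n) ⊕ (Fin n × Fin 3)) ⊕ Fin n ≃ ClawVert n where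
  toFun
    | .inl (.inl m) => .circ m
    | .inl (.inr p) => .leaf p.1 p.2
    | .inr i => .centre i
  invFun
    | .circ m => .inl (.inl m)
    | .leaf i j => .inl (.inr (i, j))
    | .centre i => .inr i
  left_inv := by rintro ((m | p) | i) <;> rfl
  right_inv := by rintro (m | ⟨i, j⟩ | i) <;> rfl

noncomputable instance clawFintype (n : ℕ) [NeZero (6 * n)] : Fintype (ClawVert n) :=
  haveI : Fintype (ZMod (6 * n)) := ZMod.fintype (6 * n)
  Fintype.ofEquiv _ (clawEquiv n)

theorem claw_sum (n : ℕ) [NeZero (6 * n)] (f : ClawVert n → ℝ) :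
    ∑ v, f v = (∑ m : ZMod (6 * n), f (.circ m)) + (∑ p : Fin n × Fin 3, f (.leaf p.1 p.2))
      + ∑ i : Fin n, f (.centre i) := by
  rw [← Equiv.sum_comp (clawEquiv n), Fintype.sum_sum_type, Fintype.sum_sum_type]
  rfl

open Classical in
theorem cdc_sum {V : Type*} [Fintype V] (G : SimpleGraph V) (f : V × Bool → ℝ) (v : V) (b : Bool) :
    (∑ y, if (CDC G).Adj (v, b) y then f y else 0)
      = ∑ w, if G.Adj v w then f (w, !b) else 0 := by
  rw [Fintype.sum_prod_type]
  refine Finset.sum_congr rfl fun w _ => ?_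
  cases b <;> simp [CDC]

/-- successor in the two circuits -/
def nxt (n : ℕ) (m : ZMod (6 * n)) : ZMod (6 * n) :=
  if m.val % (3 * n) = 3 * n - 1 then m + 1 + ((3 * n : ℕ) : ZMod (6 * n)) else m + 1

/-- predecessor in the two circuits -/
def prv (n : ℕ) (m : ZMod (6 * n)) : ZMod (6 * n) :=
  if m.val % (3 * n) = 0 then m - 1 + ((3 * n : ℕ) : ZMod (6 * n)) else m - 1

theorem half_add (n : ℕ) :
    ((3 * n : ℕ) : ZMod (6 * n)) + ((3 * n : ℕ) : ZMod (6 * n)) = 0 := by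
  rw [← Nat.cast_add, show 3 * n + 3 * n = 6 * n by ring, ZMod.natCast_self]

theorem val_half (n : ℕ) (hn : 2 ≤ n) (m : ZMod (6 * n)) :
    (m + ((3 * n : ℕ) : ZMod (6 * n))).val
      = if m.val < 3 * n then m.val + 3 * n else m.val - 3 * n := by
  have : NeZero (6 * n) := ⟨by omega⟩
  have hm := m.val_lt
  rw [ZMod.val_add, ZMod.val_natCast, Nat.mod_eq_of_lt (show 3 * n < 6 * n by omega)]
  split_ifs with h
  · exact Nat.mod_eq_of_lt (by omega)
  · rw [Nat.mod_eq_sub_mod (by omega), Nat.mod_eq_of_lt (by omega)]; omega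

theorem val_one_add (n : ℕ) (hn : 2 ≤ n) (m : ZMod (6 * n)) :
    (m + 1).val = if m.val = 6 * n - 1 then 0 else m.val + 1 := by
  have : NeZero (6 * n) := ⟨by omega⟩
  have hm := m.val_lt
  rw [ZMod.val_add, ZMod.val_one'' (by omega)]
  split_ifs with h
  · rw [h, show 6 * n - 1 + 1 = 6 * n by omega, Nat.mod_self]
  · exact Nat.mod_eq_of_lt (by omega)

theorem div_mod_cases (N a : ℕ) (ha : a < 2 * N) :
    (a < N ∧ a / N = 0 ∧ a % N = a) ∨ (N ≤ a ∧ a / N = 1 ∧ a % N = a - N) := by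
  rcases lt_or_ge a N with h | h
  · exact Or.inl ⟨h, Nat.div_eq_of_lt h, Nat.mod_eq_of_lt h⟩
  · refine Or.inr ⟨h, ?_, ?_⟩
    · rw [Nat.div_eq_sub_div (by omega) h, Nat.div_eq_of_lt (by omega)]
    · rw [Nat.mod_eq_sub_mod h, Nat.mod_eq_of_lt (by omega)]

theorem val_nxt (n : ℕ) (hn : 2 ≤ n) (m : ZMod (6 * n)) :
    (nxt n m).val = if m.val = 3 * n - 1 then 0 else if m.val = 6 * n - 1 then 3 * n
      else m.val + 1 := by
  have : NeZero (6 * n) := ⟨by omega⟩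
  have hm := m.val_lt
  have h1 := val_one_add n hn m
  have h2 := val_half n hn (m + 1)
  have h3 := div_mod_cases (3 * n) m.val (by omega)
  unfold nxt
  split_ifs at * <;> omega

theorem rel'_iff_nxt (n : ℕ) (hn : 2 ≤ n) (m m' : ZMod (6 * n)) :
    cgRel' n (.circ m) (.circ m') ↔ m' = nxt n m := by
  have : NeZero (6 * n) := ⟨by omega⟩
  have hm := m.val_lt
  have hm' := m'.val_lt
  rw [← (ZMod.val_injective (6 * n)).eq_iff, val_nxt n hn]
  have h3 := div_mod_cases (3 * n) m.val (by omega)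
  have h4 := div_mod_cases (3 * n) m'.val (by omega)
  have h5 : (m.val % (3 * n) + 1) % (3 * n)
      = if m.val % (3 * n) = 3 * n - 1 then 0 else m.val % (3 * n) + 1 := by
    split_ifs with h
    · rw [h, show 3 * n - 1 + 1 = 3 * n by omega, Nat.mod_self]
    · exact Nat.mod_eq_of_lt (by omega)
  simp only [cgRel']
  rw [h5]
  split_ifs <;> omega

theorem nxt_prv (n : ℕ) (hn : 2 ≤ n) (m m' : ZMod (6 * n)) :
    m = nxt n m' ↔ m' = prv n m := by
  have : NeZero (6 * n) := ⟨by omega⟩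
  have hinj : Function.Injective (nxt n) := by
    intro a b hab
    have h := congrArg ZMod.val hab
    rw [val_nxt n hn, val_nxt n hn] at h
    apply ZMod.val_injective
    have ha := a.val_lt
    have hb := b.val_lt
    split_ifs at h <;> omega
  have hright : nxt n (prv n m) = m := by
    have hm := m.val_lt
    have h3 := div_mod_cases (3 * n) m.val (by omega)
    have h1 := val_one_add n hn (m - 1)
    rw [sub_add_cancel] at h1
    have h2 := val_half n hn (m - 1)
    have h6 := (m - 1).val_lt
    apply ZMod.val_injective
    rw [val_nxt n hn]
    unfold prv
    split_ifs at * <;> omega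
  constructor
  · intro h; apply hinj; rw [hright, ← h]
  · intro h; rw [h, hright]

open Classical in
theorem sum_two {α : Type*} [Fintype α] (P : α → Prop) (a b : α) (hab : a ≠ b)
    (hP : ∀ x, P x ↔ x = a ∨ x = b) (f : α → ℝ) :
    (∑ x, if P x then f x else 0) = f a + f b := by
  have : ∀ x, (if P x then f x else 0) = (if x = a then f x else 0) + (if x = b then f x else 0) := by
    intro x
    by_cases h1 : x = a
    · subst h1; simp [hP, hab]
    · by_cases h2 : x = b
      · subst h2; simp [hP, h1]
      · simp [hP, h1, h2]
  simp [this, Finset.sum_add_distrib]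

theorem adj_circ (n : ℕ) (hn : 2 ≤ n) (m m' : ZMod (6 * n)) :
    (CG n).Adj (.circ m) (.circ m') ↔ m' = m + 1 ∨ m' = m - 1 := by
  have : Fact (1 < 6 * n) := ⟨by omega⟩
  simp only [CG, SimpleGraph.fromRel_adj, cgRel, ne_eq, ClawVert.circ.injEq]
  constructor
  · rintro ⟨_, h | h⟩
    · exact Or.inl h
    · right; rw [h]; ring
  · rintro (h | h)
    · refine ⟨?_, Or.inl h⟩
      rw [h]; simp
    · refine ⟨?_, Or.inr (by rw [h]; ring)⟩
      rw [h]; intro h'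
      have : (1 : ZMod (6 * n)) = 0 := by linear_combination h'
      exact one_ne_zero this

theorem adj'_circ (n : ℕ) (hn : 2 ≤ n) (m m' : ZMod (6 * n)) :
    (CG' n).Adj (.circ m) (.circ m') ↔ m' = nxt n m ∨ m' = prv n m := by
  have hne : ∀ a : ZMod (6 * n), a ≠ nxt n a := by
    intro a h
    have h := congrArg ZMod.val h
    rw [val_nxt n hn] at h
    split_ifs at h <;> omega
  simp only [CG', SimpleGraph.fromRel_adj, rel'_iff_nxt n hn, ne_eq, ClawVert.circ.injEq]
  rw [nxt_prv n hn m m']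
  constructor
  · exact fun h => h.2
  · intro h
    refine ⟨?_, h⟩
    rintro rfl
    rcases h with h | h
    · exact hne _ h
    · exact hne _ ((nxt_prv n hn _ _).2 h)

theorem nxt_ne_prv (n : ℕ) (hn : 2 ≤ n) (m : ZMod (6 * n)) : nxt n m ≠ prv n m := by
  have : NeZero (6 * n) := ⟨by omega⟩
  intro h
  have h := congrArg ZMod.val ((nxt_prv n hn _ _).2 h)
  have hm := m.val_lt
  rw [val_nxt n hn, val_nxt n hn] at h
  split_ifs at h <;> omega

theorem succ_ne_pred (n : ℕ) (hn : 2 ≤ n) (m : ZMod (6 * n)) : m + 1 ≠ m - 1 := by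
  intro h
  have h2 : ((2 : ℕ) : ZMod (6 * n)) = 0 := by push_cast; linear_combination h
  rw [ZMod.natCast_eq_zero_iff] at h2
  have := Nat.le_of_dvd (by norm_num) h2
  omega

theorem half_ne (n : ℕ) (hn : 2 ≤ n) (m : ZMod (6 * n)) :
    m ≠ m + ((3 * n : ℕ) : ZMod (6 * n)) := by
  intro h
  have h := congrArg ZMod.val h
  rw [val_half n hn] at h
  split_ifs at h <;> omega

/-- contribution of the leaves at a circuit vertex -/
noncomputable def leafPart (n : ℕ) (F : ClawVert n → ℝ) (m : ZMod (6 * n)) : ℝ :=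
  open Classical in
  ∑ p : Fin n × Fin 3, if cgRel n (.leaf p.1 p.2) (.circ m) then F (.leaf p.1 p.2) else 0

theorem leafPart_half (n : ℕ) (F : ClawVert n → ℝ) (m : ZMod (6 * n)) :
    leafPart n F (m + ((3 * n : ℕ) : ZMod (6 * n))) = leafPart n F m := by
  classical
  unfold leafPart
  refine Finset.sum_congr rfl fun p _ => ?_
  have h := half_add n
  have : cgRel n (.leaf p.1 p.2) (.circ (m + ((3 * n : ℕ) : ZMod (6 * n))))
      ↔ cgRel n (.leaf p.1 p.2) (.circ m) := by
    simp only [cgRel]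
    constructor
    · rintro (h' | h')
      · right; linear_combination h' - h
      · left; linear_combination h'
    · rintro (h' | h')
      · right; linear_combination h'
      · left; linear_combination h' + h
  simp only [this]

open Classical in
theorem sum_circ (n : ℕ) [NeZero (6 * n)] (hn : 2 ≤ n) (F : ClawVert n → ℝ) (m : ZMod (6 * n)) :
    (∑ w, if (CG n).Adj (.circ m) w then F w else 0)
      = F (.circ (m + 1)) + F (.circ (m - 1)) + leafPart n F m := by
  rw [claw_sum, sum_two _ _ _ (succ_ne_pred n hn m) (adj_circ n hn m) (fun x => F (.circ x))]
  simp [leafPart, CG, cgRel]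

open Classical in
theorem sum'_circ (n : ℕ) [NeZero (6 * n)] (hn : 2 ≤ n) (F : ClawVert n → ℝ) (m : ZMod (6 * n)) :
    (∑ w, if (CG' n).Adj (.circ m) w then F w else 0)
      = F (.circ (nxt n m)) + F (.circ (prv n m)) + leafPart n F m := by
  rw [claw_sum, sum_two _ _ _ (nxt_ne_prv n hn m) (adj'_circ n hn m) (fun x => F (.circ x))]
  simp [leafPart, CG', cgRel', cgRel]

theorem adj_leaf (n : ℕ) (i : Fin n) (j : Fin 3) (w : ClawVert n) :
    (CG n).Adj (.leaf i j) w ↔ (CG' n).Adj (.leaf i j) w := by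
  cases w <;> simp [CG, CG', cgRel, cgRel']

theorem adj_centre (n : ℕ) (i : Fin n) (w : ClawVert n) :
    (CG n).Adj (.centre i) w ↔ (CG' n).Adj (.centre i) w := by
  cases w <;> simp [CG, CG', cgRel, cgRel']

/-- Functions in the eigenspace for `CG` are symmetric under the half-turn. -/
theorem eig_symm (n : ℕ) [NeZero (6 * n)] (hn : 2 ≤ n) (heven : Even n)
    (f : ClawVert n × Bool → ℝ) (hf : f ∈ eigTwo (CDC (CG n))) (m : ZMod (6 * n)) (b : Bool) :
    f (.circ (m + ((3 * n : ℕ) : ZMod (6 * n))), b) = f (.circ m, b) := by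
  classical
  set H : ZMod (6 * n) := ((3 * n : ℕ) : ZMod (6 * n)) with hH
  have hHH : H + H = 0 := half_add n
  rw [mem_eigTwo] at hf
  have key : ∀ (x : ZMod (6 * n)) (c : Bool),
      f (.circ (x + 1), !c) + f (.circ (x - 1), !c)
        + leafPart n (fun w => f (w, !c)) x = 2 * f (.circ x, c) := by
    intro x c
    have := hf (.circ x, c)
    rw [cdc_sum, sum_circ n hn (fun w => f (w, !c)) x] at this
    exact this
  let g : ZMod (6 * n) → Bool → ℝ := fun x c => f (.circ x, c) - f (.circ (x + H), c)
  have hg : ∀ x c, g (x + 1) (!c) + g (x - 1) (!c) = 2 * g x c := by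
    intro x c
    have h1 := key x c
    have h2 := key (x + H) c
    rw [leafPart_half] at h2
    rw [show x + H + 1 = x + 1 + H by ring, show x + H - 1 = x - 1 + H by ring] at h2
    simp only [g]; linarith
  have hgH : ∀ x c, g (x + H) c = - g x c := by
    intro x c
    simp only [g]
    rw [show x + H + H = x by rw [add_assoc, hHH, add_zero]]; ring
  let a : ℕ → ℝ := fun j => g (m + (j : ZMod (6 * n))) (if Even j then b else !b)
  have ha : ∀ j, a (j + 2) + a j = 2 * a (j + 1) := by
    intro j
    have h := hg (m + ((j + 1 : ℕ) : ZMod (6 * n))) (if Even (j + 1) then b else !b)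
    simp only [a]
    rw [← h]
    have e1 : m + ((j + 1 : ℕ) : ZMod (6 * n)) + 1 = m + ((j + 2 : ℕ) : ZMod (6 * n)) := by
      push_cast; ring
    have e2 : m + ((j + 1 : ℕ) : ZMod (6 * n)) - 1 = m + (j : ZMod (6 * n)) := by
      push_cast; ring
    rw [e1, e2]
    by_cases hj : Even j <;> simp [Nat.even_add, hj]
  have hlin : ∀ j : ℕ, a j = a 0 + j * (a 1 - a 0) ∧ a (j + 1) = a 0 + (j + 1) * (a 1 - a 0) := by
    intro j
    induction j with
    | zero => constructor <;> simp
    | succ k ih =>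
      obtain ⟨i1, i2⟩ := ih
      have := ha k
      constructor
      · rw [i2]; push_cast; ring
      · rw [show k + 1 + 1 = k + 2 by ring]; push_cast; linarith
  have h3 : a (3 * n) = - a 0 := by
    have := hgH m b
    simp only [a]
    have he : Even (3 * n) := heven.mul_left 3
    simp [he]
    simpa [hH] using this
  have h6 : a (6 * n) = a 0 := by
    simp only [a]
    have he : Even (6 * n) := heven.mul_left 6
    rw [ZMod.natCast_self]
    simp [he]
  have l3 := (hlin (3 * n)).1
  have l6 := (hlin (6 * n)).1
  push_cast at l3 l6
  have : a 0 = 0 := by linarith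
  simp [a, g] at this
  linarith

theorem eig_le (n : ℕ) [NeZero (6 * n)] (hn : 2 ≤ n) (heven : Even n) :
    eigTwo (CDC (CG n)) ≤ eigTwo (CDC (CG' n)) := by
  classical
  intro f hf
  have hs := eig_symm n hn heven f hf
  rw [mem_eigTwo] at hf ⊢
  rintro ⟨v, b⟩
  have h := hf (v, b)
  rw [cdc_sum] at h ⊢
  rcases v with m | ⟨i, j⟩ | i
  · rw [sum_circ n hn (fun w => f (w, !b))] at h
    rw [sum'_circ n hn (fun w => f (w, !b))]
    rw [← h]
    have e1 : f (.circ (nxt n m), !b) = f (.circ (m + 1), !b) := by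
      unfold nxt; split_ifs
      · exact hs _ _
      · rfl
    have e2 : f (.circ (prv n m), !b) = f (.circ (m - 1), !b) := by
      unfold prv; split_ifs
      · exact hs _ _
      · rfl
    simp only [e1, e2]
  · simpa only [adj_leaf] using h
  · simpa only [adj_centre] using h

/-- The separating eigenvector. -/
noncomputable def sepVec (n : ℕ) : ClawVert n → ℝ
  | .circ m => if m.val < 3 * n then 1 else -1
  | _ => 0

theorem sep_mem (n : ℕ) [NeZero (6 * n)] (hn : 2 ≤ n) :
    (fun x => sepVec n x.1) ∈ eigTwo (CDC (CG' n)) := by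
  classical
  rw [mem_eigTwo]
  rintro ⟨v, b⟩
  rw [cdc_sum]
  rcases v with m | ⟨i, j⟩ | i
  · rw [sum'_circ n hn (fun w => sepVec n w)]
    have e0 : leafPart n (fun w => sepVec n w) m = 0 := by simp [leafPart, sepVec]
    have en : ∀ x, sepVec n (.circ (nxt n x)) = sepVec n (.circ x) := by
      intro x
      have hx := x.val_lt
      simp only [sepVec]
      rw [val_nxt n hn]
      congr 1
      apply propext
      split_ifs <;> omega
    have ep : sepVec n (.circ (prv n m)) = sepVec n (.circ m) := by
      rw [← en (prv n m), ← (nxt_prv n hn m (prv n m)).2 rfl]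
    simp only [e0, en, ep]; ring
  · rw [claw_sum]
    rw [sum_two _ _ _ (half_ne n hn (((i : ℕ) : ZMod (6 * n))
      + ((j : ℕ) : ZMod (6 * n)) * ((n : ℕ) : ZMod (6 * n)))) ?_ (fun x => sepVec n (.circ x))]
    · simp only [sepVec]
      rw [val_half n hn]
      have hx := (((i : ℕ) : ZMod (6 * n))
        + ((j : ℕ) : ZMod (6 * n)) * ((n : ℕ) : ZMod (6 * n))).val_lt
      split_ifs <;> first | omega | simp
    · intro x
      simp [CG', cgRel']
  · rw [claw_sum]
    simp [CG', cgRel', sepVec]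

theorem sep_not_mem (n : ℕ) [NeZero (6 * n)] (hn : 2 ≤ n) (heven : Even n) :
    (fun x => sepVec n x.1) ∉ eigTwo (CDC (CG n)) := by
  intro h
  have := eig_symm n hn heven _ h 0 true
  simp only [sepVec] at this
  rw [val_half n hn] at this
  have h0 : 0 < 3 * n := by omega
  simp [h0, ZMod.val_zero] at this
  norm_num at this

theorem cdc_not_iso (n : ℕ) (hn : 2 ≤ n) (heven : Even n) :
    IsEmpty (CDC (CG n) ≃g CDC (CG' n)) := by
  have : NeZero (6 * n) := ⟨by omega⟩
  refine ⟨fun e => ?_⟩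
  have h1 := eigTwo_finrank_le e
  have h2 : eigTwo (CDC (CG n)) < eigTwo (CDC (CG' n)) :=
    lt_of_le_of_ne (eig_le n hn heven) fun h =>
      sep_not_mem n hn heven (h ▸ sep_mem n hn)
  have h3 := Submodule.finrank_lt_finrank_of_lt h2
  omega

theorem claw_cdc_not_iso_of_even (n : ℕ) (hn : 2 ≤ n) (heven : Even n) :
    IsEmpty (CDC (CG n) ≃g CDC (CG' n)) ∧
    ¬ (∃ α β : ClawVert n ≃ ClawVert n,
        ∀ x y : ClawVert n, (CG' n).Adj x y ↔ (CG n).Adj (α x) (β y)) := by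
  refine ⟨cdc_not_iso n hn heven, ?_⟩
  rintro ⟨α, β, h⟩
  let e : ClawVert n × Bool ≃ ClawVert n × Bool :=
    { toFun := fun x => (if x.2 then β x.1 else α x.1, x.2)
      invFun := fun x => (if x.2 then β.symm x.1 else α.symm x.1, x.2)
      left_inv := by rintro ⟨v, b⟩; cases b <;> simp
      right_inv := by rintro ⟨v, b⟩; cases b <;> simp }
  let E : CDC (CG' n) ≃g CDC (CG n) :=
    { e with
      map_rel_iff' := by
        rintro ⟨v, b⟩ ⟨w, c⟩
        cases b <;> cases c <;> simp [e, CDC, h]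
        rw [(CG n).adj_comm, ← h, (CG' n).adj_comm, h] }
  exact (cdc_not_iso n hn heven).false E.symm
end
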